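/- Let (A,<) be a WDFA over (Σ,≺) with initial state q₀ in which every state is reachable, and for each state q let I_q = {α ∈ Σ* : δ(q₀,α) = q}. Then for all distinct states q and p: q < p if and only if α ≺ β (co-lexicographically) for every α ∈ I_q and every β ∈ I_p. -/

import Mathlib

/-!
Common framework: words over an ordered alphabet, co-lexicographic order,
(partial) DFAs and NFAs, Wheeler automata and Wheeler languages,
following "Ordering regular languages: a danger zone".
-/

namespace WheelerPaper

/-- Strict co-lexicographic order on words: compare the reverses lexicographically. -/
def Colex {A : Type} [LinearOrder A] (x y : List A) : Prop :=
  List.Lex (· < ·) x.reverse y.reverse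

/-- Non-strict co-lexicographic order. -/
def ColexLE {A : Type} [LinearOrder A] (x y : List A) : Prop :=
  Colex x y ∨ x = y

/-- Right context `α⁻¹L` of a word `α` with respect to a language `L`. -/
def rc {A : Type} (L : Set (List A)) (α : List A) : Set (List A) :=
  {γ | α ++ γ ∈ L}

/-- `Pref L`: the set of prefixes of words of `L`. -/
def Pref {A : Type} (L : Set (List A)) : Set (List A) :=
  {α | ∃ β, α ++ β ∈ L}

/-- `wpow γ i` is `γ^i`, the `i`-fold concatenation of the word `γ`. -/
def wpow {A : Type} (γ : List A) : ℕ → List A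
  | 0 => []
  | n + 1 => γ ++ wpow γ n

/-- A DFA with a possibly partial transition function. -/
structure PDFA (A : Type) (Q : Type) where
  init : Q
  trans : Q → A → Option Q
  accept : Q → Prop

/-- Extended (partial) transition function of a `PDFA`. -/
def PDFA.evalFrom {A Q : Type} (M : PDFA A Q) : Q → List A → Option Q
  | q, [] => some q
  | q, a :: w => (M.trans q a).bind fun q' => PDFA.evalFrom M q' w

/-- The language accepted by a `PDFA`. -/
def PDFA.accepts {A Q : Type} (M : PDFA A Q) : Set (List A) :=
  {w | ∃ q, M.evalFrom M.init w = some q ∧ M.accept q}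

/-- A `PDFA` is trim if every state is reachable from the initial state and
every state can reach some accepting state. -/
def PDFA.Trim {A Q : Type} (M : PDFA A Q) : Prop :=
  (∀ q : Q, ∃ α, M.evalFrom M.init α = some q) ∧
  (∀ q : Q, ∃ α q', M.evalFrom q α = some q' ∧ M.accept q')

/-- `r` is a Wheeler order for the DFA `M`: a strict total order on states whose
minimum is the initial state, the initial state has no incoming transitions, and
the two Wheeler conditions hold. -/
def IsWheelerOrder {A Q : Type} [LinearOrder A] (M : PDFA A Q) (r : Q → Q → Prop) : Prop :=
  IsStrictTotalOrder Q r ∧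
  (∀ q : Q, q ≠ M.init → r M.init q) ∧
  (∀ (q : Q) (a : A), M.trans q a ≠ some M.init) ∧
  (∀ (u₁ : Q) (a₁ : A) (v₁ : Q) (u₂ : Q) (a₂ : A) (v₂ : Q),
     M.trans u₁ a₁ = some v₁ → M.trans u₂ a₂ = some v₂ →
     (a₁ < a₂ → r v₁ v₂) ∧ (a₁ = a₂ → r u₁ u₂ → (r v₁ v₂ ∨ v₁ = v₂)))

/-- A language is Wheeler (w.r.t. the given order on the alphabet) if it is
recognized by some Wheeler DFA. -/
def IsWheelerLang {A : Type} [LinearOrder A] (L : Set (List A)) : Prop :=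
  ∃ (n : ℕ) (M : PDFA A (Fin n)) (r : Fin n → Fin n → Prop),
    IsWheelerOrder M r ∧ M.accepts = L

/-- A language is regular if it is recognized by some finite-state (partial) DFA. -/
def IsRegular {A : Type} (L : Set (List A)) : Prop :=
  ∃ (k : ℕ) (M : PDFA A (Fin k)), M.accepts = L

/-- The input-consistent convex refinement `≡^c_L` of the Myhill–Nerode
equivalence: same right context, same last character (or both empty), and every
word of `Pref L` co-lexicographically between the two words has the same right
context. -/
def EquivC {A : Type} [LinearOrder A] (L : Set (List A)) (α β : List A) : Prop :=
  rc L α = rc L β ∧ α.getLast? = β.getLast? ∧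
  ∀ γ ∈ Pref L,
    ((ColexLE α γ ∧ ColexLE γ β) ∨ (ColexLE β γ ∧ ColexLE γ α)) →
    rc L γ = rc L α

/-- An NFA with a single initial state. -/
structure NFA' (A : Type) (Q : Type) where
  init : Q
  trans : Q → A → Set Q
  accept : Q → Prop

/-- One step of an `NFA'` on a set of states. -/
def NFA'.stepSet {A Q : Type} (M : NFA' A Q) (S : Set Q) (a : A) : Set Q :=
  {q | ∃ p ∈ S, q ∈ M.trans p a}

/-- Extended transition function of an `NFA'` on sets of states. -/
def NFA'.evalFrom {A Q : Type} (M : NFA' A Q) : Set Q → List A → Set Q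
  | S, [] => S
  | S, a :: w => NFA'.evalFrom M (M.stepSet S a) w

/-- The language accepted by an `NFA'`. -/
def NFA'.accepts {A Q : Type} (M : NFA' A Q) : Set (List A) :=
  {w | ∃ q ∈ M.evalFrom {M.init} w, M.accept q}

/-- An `NFA'` is trim if every state is reachable from the initial state and
every state can reach some accepting state. -/
def NFA'.Trim {A Q : Type} (M : NFA' A Q) : Prop :=
  (∀ q : Q, ∃ α, q ∈ M.evalFrom {M.init} α) ∧
  (∀ q : Q, ∃ α, ∃ q' ∈ M.evalFrom {q} α, M.accept q')

/-- `r` is a Wheeler order for the NFA `M`. -/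
def IsWheelerNFAOrder {A Q : Type} [LinearOrder A] (M : NFA' A Q) (r : Q → Q → Prop) : Prop :=
  IsStrictTotalOrder Q r ∧
  (∀ q : Q, q ≠ M.init → r M.init q) ∧
  (∀ (q : Q) (a : A), M.init ∉ M.trans q a) ∧
  (∀ (u₁ : Q) (a₁ : A) (v₁ : Q) (u₂ : Q) (a₂ : A) (v₂ : Q),
     v₁ ∈ M.trans u₁ a₁ → v₂ ∈ M.trans u₂ a₂ →
     (a₁ < a₂ → r v₁ v₂) ∧ (a₁ = a₂ → r u₁ u₂ → (r v₁ v₂ ∨ v₁ = v₂)))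

/-- `I` is an interval with respect to the strict order `r`. -/
def IsIntervalRel {Q : Type} (r : Q → Q → Prop) (I : Set Q) : Prop :=
  ∀ x y z : Q, (r x y ∨ x = y) → (r y z ∨ y = z) → x ∈ I → z ∈ I → y ∈ I

/-- The class of star-free languages: built from `∅`, `{ε}` and the singletons
`{a}` by union, concatenation and complement. -/
inductive StarFree {A : Type} : Set (List A) → Prop
  | empty : StarFree ∅
  | eps : StarFree {[]}
  | single (a : A) : StarFree {[a]}
  | union {L₁ L₂ : Set (List A)} : StarFree L₁ → StarFree L₂ → StarFree (L₁ ∪ L₂)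
  | concat {L₁ L₂ : Set (List A)} : StarFree L₁ → StarFree L₂ →
      StarFree {w | ∃ u v, u ∈ L₁ ∧ v ∈ L₂ ∧ w = u ++ v}
  | compl {L : Set (List A)} : StarFree L → StarFree Lᶜ


/-- The language of all words over the sub-alphabet `S`. -/
def wordsOver {A : Type} (S : Set A) : Language A := {w | ∀ x ∈ w, x ∈ S}


/-!
Reading words is monotone: if `α` precedes `β` co-lexicographically, then the state reached by `α`
lies weakly below the state reached by `β`. This follows by induction from the right end of the
words, since the co-lexicographic order compares last letters first and the Wheeler conditions
compare states by the label of their incoming transitions first. As the co-lexicographic order is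
total, monotonicity for words yields both implications for distinct states.
-/

section Colex

variable {A : Type} [LinearOrder A] {α β : List A} {a b : A}

theorem colex_iff_reverse_lt : Colex α β ↔ α.reverse < β.reverse :=
  Iff.rfl

theorem colex_trichotomy (α β : List A) : Colex α β ∨ α = β ∨ Colex β α := by
  simpa only [colex_iff_reverse_lt, List.reverse_inj] using lt_trichotomy α.reverse β.reverse

theorem not_colex_nil (α : List A) : ¬ Colex α [] :=
  List.not_lt_nil α.reverse

theorem colex_concat_concat_iff :
    Colex (α ++ [a]) (β ++ [b]) ↔ a < b ∨ a = b ∧ Colex α β := by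
  simp only [colex_iff_reverse_lt, List.reverse_concat, List.cons_lt_cons_iff]

end Colex

namespace PDFA

variable {A Q : Type} (M : PDFA A Q)

theorem evalFrom_append (q : Q) (v w : List A) :
    M.evalFrom q (v ++ w) = (M.evalFrom q v).bind fun u => M.evalFrom u w := by
  induction v generalizing q with
  | nil => rfl
  | cons a v ih => simp only [List.cons_append, evalFrom, ih, Option.bind_assoc]

theorem evalFrom_singleton (q : Q) (a : A) : M.evalFrom q [a] = M.trans q a :=
  Option.bind_fun_some (M.trans q a)

/-- The set `I_q` of the words labelling the paths from the initial state to `q`. -/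
def wordsTo (q : Q) : Set (List A) :=
  {α | M.evalFrom M.init α = some q}

variable {M} {q p : Q} {α : List A} {a : A}

theorem nil_mem_wordsTo_iff : [] ∈ M.wordsTo q ↔ M.init = q :=
  Option.some_inj

theorem concat_mem_wordsTo_iff :
    α ++ [a] ∈ M.wordsTo q ↔ ∃ u, α ∈ M.wordsTo u ∧ M.trans u a = some q := by
  simp only [wordsTo, Set.mem_ofPred_eq, evalFrom_append, evalFrom_singleton,
    Option.bind_eq_some_iff]

theorem eq_of_mem_wordsTo (hq : α ∈ M.wordsTo q) (hp : α ∈ M.wordsTo p) : q = p :=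
  Option.some_injective Q (hq.symm.trans hp)

end PDFA

namespace IsWheelerOrder

variable {A Q : Type} [LinearOrder A] {M : PDFA A Q} {r : Q → Q → Prop}

theorem rel_or_eq_of_colex (hW : IsWheelerOrder M r) {q p : Q} {α β : List A}
    (hα : α ∈ M.wordsTo q) (hβ : β ∈ M.wordsTo p) (hαβ : Colex α β) : r q p ∨ q = p := by
  obtain ⟨-, init_min, -, wheeler⟩ := hW
  induction α using List.reverseRecOn generalizing q p β with
  | nil =>
    obtain rfl := PDFA.nil_mem_wordsTo_iff.mp hα
    exact (eq_or_ne p M.init).symm.imp (init_min p) Eq.symm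
  | append_singleton α a ih =>
    cases β using List.reverseRecOn with
    | nil => exact absurd hαβ (not_colex_nil _)
    | append_singleton β b =>
      obtain ⟨u, hu, huq⟩ := PDFA.concat_mem_wordsTo_iff.mp hα
      obtain ⟨v, hv, hvp⟩ := PDFA.concat_mem_wordsTo_iff.mp hβ
      obtain ⟨wheeler_lt, wheeler_eq⟩ := wheeler u a q v b p huq hvp
      rcases colex_concat_concat_iff.mp hαβ with hab | ⟨rfl, hαβ'⟩
      · exact Or.inl (wheeler_lt hab)
      · rcases ih hu hv hαβ' with huv | rfl
        · exact wheeler_eq rfl huv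
        · exact Or.inr (Option.some_injective Q (huq.symm.trans hvp))

theorem colex_of_rel (hW : IsWheelerOrder M r) {q p : Q} {α β : List A}
    (hα : α ∈ M.wordsTo q) (hβ : β ∈ M.wordsTo p) (hqp : r q p) : Colex α β := by
  have := hW.1
  rcases colex_trichotomy α β with hαβ | rfl | hβα
  · exact hαβ
  · obtain rfl := PDFA.eq_of_mem_wordsTo hα hβ
    exact absurd hqp (irrefl_of r q)
  · rcases hW.rel_or_eq_of_colex hβ hα hβα with hpq | rfl
    · exact absurd hpq (asymm_of r hqp)
    · exact absurd hqp (irrefl_of r p)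

end IsWheelerOrder

theorem statement12_general {A Q : Type} [LinearOrder A] {M : PDFA A Q} {r : Q → Q → Prop}
    (hW : IsWheelerOrder M r) {q p : Q} (hq : (M.wordsTo q).Nonempty)
    (hp : (M.wordsTo p).Nonempty) (hqp : q ≠ p) :
    r q p ↔ ∀ α ∈ M.wordsTo q, ∀ β ∈ M.wordsTo p, Colex α β := by
  refine ⟨fun h α hα β hβ => hW.colex_of_rel hα hβ h, fun h => ?_⟩
  obtain ⟨α, hα⟩ := hq
  obtain ⟨β, hβ⟩ := hp
  exact (hW.rel_or_eq_of_colex hα hβ (h α hα β hβ)).resolve_right hqp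

section Statement12

/-- in a WDFA with all states reachable, `q < p` iff every
word entering `q` co-lexicographically precedes every word entering `p`. -/
theorem statement12 {A Q : Type} [LinearOrder A] [Fintype Q]
    (M : PDFA A Q) (r : Q → Q → Prop) (hW : IsWheelerOrder M r)
    (hreach : ∀ q : Q, ∃ α : List A, M.evalFrom M.init α = some q) :
    ∀ q p : Q, q ≠ p →
      (r q p ↔ ∀ α : List A, M.evalFrom M.init α = some q →
               ∀ β : List A, M.evalFrom M.init β = some p → Colex α β) :=
  fun q p hqp => statement12_general hW (hreach q) (hreach p) hqp

end Statement12

end WheelerPaper
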